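/- arXiv:0711.1890 — 5 statements merged into one kernel-verified Lean document; each statement's English description precedes it below -/
import Mathlib

section
/- Let i be a positive integer and let c > 0, m > 0 be real. Let X and W be independent real random variables on a probability space, where X has the Gamma distribution with shape i and rate c, and W has the Gamma distribution with shape m and rate m (Nakagami-m power fading). Then the random variable X/W has probability density function f(x) = m^(m+1) · (Γ(m+i)/(Γ(m+1)·Γ(i))) · c^i · x^(i-1) / (m + c·x)^(m+i) for x > 0 (and 0 for x ≤ 0) with respect to Lebesgue measure. -/
/-!
The joint density of `(X, W)` is a product; substituting `x = w * y` for fixed `w ≠ 0` shows that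
`X / W` has density `y ↦ ∫ |w| f(w y) g(w) dw`. For Gamma densities with parameters `(a, r)` and
`(b, s)`, the integrand is, up to a factor depending only on `y`, the Gamma density in `w` with
shape `a + b` and rate `r y + s`, which integrates to one; that factor is the density of the ratio.
-/

open MeasureTheory ProbabilityTheory Real

open scoped ENNReal

section QuotientDensity

lemma lintegral_eq_ofReal_abs_mul_lintegral_comp_mul_left (f : ℝ → ℝ≥0∞) {w : ℝ} (hw : w ≠ 0) :
    ∫⁻ x, f x = ENNReal.ofReal |w| * ∫⁻ y, f (w * y) := by
  conv_lhs => rw [← Real.smul_map_volume_mul_left hw]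
  rw [lintegral_smul_measure, (measurableEmbedding_mulLeft₀ hw).lintegral_map, smul_eq_mul]

variable {f g : ℝ → ℝ≥0∞}

lemma map_div_prod_withDensity (hf : Measurable f) (hg : Measurable g) :
    ((volume.withDensity f).prod (volume.withDensity g)).map (fun p ↦ p.1 / p.2) =
      volume.withDensity fun y ↦ ∫⁻ w, ENNReal.ofReal |w| * f (w * y) * g w := by
  refine Measure.ext_of_lintegral _ fun φ hφ ↦ ?_
  have substitution {w : ℝ} (hw : w ≠ 0) : ∫⁻ x, f x * g w * φ (x / w) =
      ∫⁻ y, ENNReal.ofReal |w| * f (w * y) * g w * φ y := by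
    rw [lintegral_eq_ofReal_abs_mul_lintegral_comp_mul_left _ hw,
      ← lintegral_const_mul _ (by fun_prop)]
    simp only [mul_div_cancel_left₀ _ hw, mul_assoc]
  calc ∫⁻ z, φ z ∂((volume.withDensity f).prod (volume.withDensity g)).map (fun p ↦ p.1 / p.2)
      = ∫⁻ p : ℝ × ℝ, f p.1 * g p.2 * φ (p.1 / p.2) := by
        rw [lintegral_map hφ (by fun_prop), prod_withDensity hf hg,
          lintegral_withDensity_eq_lintegral_mul _ (by fun_prop) (by fun_prop)]
        rfl
    _ = ∫⁻ w, ∫⁻ x, f x * g w * φ (x / w) := lintegral_prod_symm _ (by fun_prop)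
    _ = ∫⁻ w, ∫⁻ y, ENNReal.ofReal |w| * f (w * y) * g w * φ y :=
        lintegral_congr_ae <| (Measure.ae_ne volume 0).mono fun _ ↦ substitution
    _ = ∫⁻ y, ∫⁻ w, ENNReal.ofReal |w| * f (w * y) * g w * φ y :=
        lintegral_lintegral_swap (by fun_prop)
    _ = ∫⁻ y, (∫⁻ w, ENNReal.ofReal |w| * f (w * y) * g w) * φ y :=
        lintegral_congr fun y ↦ lintegral_mul_const _ (by fun_prop)
    _ = ∫⁻ y, φ y ∂volume.withDensity fun y ↦ ∫⁻ w, ENNReal.ofReal |w| * f (w * y) * g w :=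
        (lintegral_withDensity_eq_lintegral_mul _
          (Measurable.lintegral_prod_right (by fun_prop)) hφ).symm

lemma hasLaw_div_withDensity {Ω : Type*} {mΩ : MeasurableSpace Ω} {P : Measure Ω}
    [IsFiniteMeasure P] {X W : Ω → ℝ} (hf : Measurable f) (hg : Measurable g)
    (hX : HasLaw X (volume.withDensity f) P) (hW : HasLaw W (volume.withDensity g) P)
    (hXW : IndepFun X W P) :
    HasLaw (fun ω ↦ X ω / W ω)
      (volume.withDensity fun y ↦ ∫⁻ w, ENNReal.ofReal |w| * f (w * y) * g w) P :=
  HasLaw.fun_comp (Y := fun p : ℝ × ℝ ↦ p.1 / p.2)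
    ⟨by fun_prop, map_div_prod_withDensity hf hg⟩ (hXW.hasLaw_prod hX hW)

end QuotientDensity

section GammaRatio

/-- The density of the ratio of independent Gamma variables with shapes `a`, `b` and rates `r`, `s`:
the beta prime density with parameters `a`, `b`, rescaled by `s / r`. It is extended by zero to
`x ≤ 0`, including the endpoint. -/
noncomputable def gammaRatioPDFReal (a r b s x : ℝ) : ℝ :=
  if 0 < x then r ^ a * s ^ b / beta a b * x ^ (a - 1) / (r * x + s) ^ (a + b) else 0

/-- `gammaRatioPDFReal` as a function valued in `ℝ≥0∞`. -/
noncomputable def gammaRatioPDF (a r b s x : ℝ) : ℝ≥0∞ :=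
  ENNReal.ofReal (gammaRatioPDFReal a r b s x)

variable {a r b s : ℝ}

lemma gammaRatioPDFReal_nonneg (ha : 0 < a) (hr : 0 < r) (hb : 0 < b) (hs : 0 < s) (x : ℝ) :
    0 ≤ gammaRatioPDFReal a r b s x := by
  have hB := beta_pos ha hb
  unfold gammaRatioPDFReal
  split_ifs <;> positivity

lemma gammaRatioPDF_of_nonpos {x : ℝ} (hx : x ≤ 0) : gammaRatioPDF a r b s x = 0 := by
  simp [gammaRatioPDF, gammaRatioPDFReal, hx.not_gt]

lemma mul_gammaPDFReal_mul_gammaPDFReal (hab : 0 < a + b) (hr : 0 < r) (hs : 0 < s) {w y : ℝ}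
    (hw : 0 < w) (hy : 0 < y) :
    w * gammaPDFReal a r (w * y) * gammaPDFReal b s w =
      gammaRatioPDFReal a r b s y * gammaPDFReal (a + b) (r * y + s) w := by
  have rpow_w : w ^ (a + b - 1) = w * w ^ (a - 1) * w ^ (b - 1) := by
    simp only [rpow_sub_one hw.ne', rpow_add hw]
    field_simp
  have exp_w : exp (-((r * y + s) * w)) = exp (-(r * (w * y))) * exp (-(s * w)) := by
    rw [← exp_add]
    ring_nf
  have hΓ : Gamma (a + b) ≠ 0 := (Gamma_pos_of_pos hab).ne'
  have hden : (r * y + s) ^ (a + b) ≠ 0 := by positivity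
  simp only [gammaPDFReal, gammaRatioPDFReal, beta, hw.le, hy, (mul_pos hw hy).le, if_true,
    mul_rpow hw.le hy.le, rpow_w, exp_w]
  field_simp

lemma ofReal_abs_mul_gammaPDF_mul_gammaPDF (ha : 0 < a) (hr : 0 < r) (hb : 0 < b) (hs : 0 < s)
    {w y : ℝ} (hw : w ≠ 0) (hy : 0 < y) :
    ENNReal.ofReal |w| * gammaPDF a r (w * y) * gammaPDF b s w =
      gammaRatioPDF a r b s y * gammaPDF (a + b) (r * y + s) w := by
  rcases hw.lt_or_gt with hw | hw
  · simp [gammaPDF_of_neg hw]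
  · rw [gammaPDF, gammaPDF, gammaPDF, gammaRatioPDF, abs_of_pos hw, ← ENNReal.ofReal_mul hw.le,
      ← ENNReal.ofReal_mul (mul_nonneg hw.le (gammaPDFReal_nonneg ha hr _)),
      ← ENNReal.ofReal_mul (gammaRatioPDFReal_nonneg ha hr hb hs y),
      mul_gammaPDFReal_mul_gammaPDFReal (add_pos ha hb) hr hs hw hy]

lemma measurable_gammaPDF (a r : ℝ) : Measurable (gammaPDF a r) :=
  (measurable_gammaPDFReal a r).ennreal_ofReal

lemma lintegral_ofReal_abs_mul_gammaPDF_mul_gammaPDF (ha : 0 < a) (hr : 0 < r) (hb : 0 < b)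
    (hs : 0 < s) {y : ℝ} (hy : y ≠ 0) :
    ∫⁻ w, ENNReal.ofReal |w| * gammaPDF a r (w * y) * gammaPDF b s w =
      gammaRatioPDF a r b s y := by
  rcases hy.lt_or_gt with hy | hy
  · rw [gammaRatioPDF_of_nonpos hy.le, ← lintegral_zero (μ := (volume : Measure ℝ))]
    refine lintegral_congr_ae <| (Measure.ae_ne volume 0).mono fun w hw ↦ ?_
    rcases hw.lt_or_gt with hw | hw
    · simp [gammaPDF_of_neg hw]
    · simp [gammaPDF_of_neg (mul_neg_of_pos_of_neg hw hy)]
  · calc ∫⁻ w, ENNReal.ofReal |w| * gammaPDF a r (w * y) * gammaPDF b s w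
        = ∫⁻ w, gammaRatioPDF a r b s y * gammaPDF (a + b) (r * y + s) w :=
          lintegral_congr_ae <| (Measure.ae_ne volume 0).mono fun w hw ↦
            ofReal_abs_mul_gammaPDF_mul_gammaPDF ha hr hb hs hw hy
      _ = gammaRatioPDF a r b s y := by
          rw [lintegral_const_mul _ (measurable_gammaPDF _ _),
            lintegral_gammaPDF_eq_one (by positivity) (by positivity), mul_one]

lemma gammaRatioPDFReal_natCast_self {i : ℕ} (hi : 0 < i) (c : ℝ) {m : ℝ} (hm : 0 < m) (x : ℝ) :
    gammaRatioPDFReal i c m m x =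
      if 0 < x then
        m ^ (m + 1) * (Gamma (m + i) / (Gamma (m + 1) * Gamma i))
          * c ^ i * x ^ (i - 1) / (m + c * x) ^ (m + (i : ℝ))
      else 0 := by
  have rpow_x : x ^ ((i : ℝ) - 1) = x ^ (i - 1) := by
    rw [← Nat.cast_pred hi, rpow_natCast]
  have hΓ : Gamma m ≠ 0 := (Gamma_pos_of_pos hm).ne'
  simp only [gammaRatioPDFReal, beta, rpow_x, rpow_natCast, Gamma_add_one hm.ne',
    rpow_add_one hm.ne', add_comm (i : ℝ) m, add_comm (c * x) m]
  congr 1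
  field_simp

end GammaRatio

theorem pathloss_with_fading_pdf_general {Ω : Type*} {mΩ : MeasurableSpace Ω} {P : Measure Ω}
    {a r b s : ℝ} (ha : 0 < a) (hr : 0 < r) (hb : 0 < b) (hs : 0 < s) {X W : Ω → ℝ}
    (hX : HasLaw X (gammaMeasure a r) P) (hW : HasLaw W (gammaMeasure b s) P)
    (hXW : IndepFun X W P) :
    HasLaw (fun ω ↦ X ω / W ω) (volume.withDensity (gammaRatioPDF a r b s)) P := by
  have := isProbabilityMeasure_gammaMeasure ha hr
  have := hX.isProbabilityMeasure
  have density_ae_eq : (fun y ↦ ∫⁻ w, ENNReal.ofReal |w| * gammaPDF a r (w * y) * gammaPDF b s w)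
      =ᵐ[volume] gammaRatioPDF a r b s :=
    (Measure.ae_ne volume 0).mono fun _ ↦
      lintegral_ofReal_abs_mul_gammaPDF_mul_gammaPDF ha hr hb hs
  rw [← withDensity_congr_ae density_ae_eq]
  exact hasLaw_div_withDensity (measurable_gammaPDF a r) (measurable_gammaPDF b s) hX hW hXW

/-- The density of the path loss with fading `ξ_i = X/W` for `δ = d/α = 1`:
if `X ~ Gamma(i, c)` and `W ~ Gamma(m, m)` (Nakagami-`m` power fading) are independent,
then `X/W` has pdf `x ↦ m^(m+1) · binom(m+i-1, m) · c^i · x^(i-1) / (m + c x)^(m+i)` on `x > 0`. -/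
theorem pathloss_with_fading_pdf
    {Ω : Type*} [MeasureSpace Ω] [IsProbabilityMeasure (ℙ : Measure Ω)]
    (i : ℕ) (hi : 0 < i) (c m : ℝ) (hc : 0 < c) (hm : 0 < m)
    (X W : Ω → ℝ) (hX : Measurable X) (hW : Measurable W)
    (hXd : Measure.map X ℙ = gammaMeasure i c)
    (hWd : Measure.map W ℙ = gammaMeasure m m)
    (hindep : IndepFun X W ℙ) :
    Measure.map (fun ω => X ω / W ω) ℙ
      = volume.withDensity (fun x : ℝ => ENNReal.ofReal
          (if 0 < x then
            m ^ (m + 1) * (Real.Gamma (m + i) / (Real.Gamma (m + 1) * Real.Gamma i))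
              * c ^ i * x ^ (i - 1) / (m + c * x) ^ (m + (i : ℝ))
          else 0)) := by
  simp only [← gammaRatioPDFReal_natCast_self hi c hm]
  exact (pathloss_with_fading_pdf_general (Nat.cast_pos.mpr hi) hc hm hm
    ⟨hX.aemeasurable, hXd⟩ ⟨hW.aemeasurable, hWd⟩ hindep).map_eq
end

section
/- Let m > 0 be real. Then ∫₀¹ (1 − Γ_ic(m, m·x)/Γ(m)) dx = (m^(m−1)/Γ(m)) · e^(−m), where Γ_ic(a, y) = ∫_y^∞ t^(a−1)·e^(−t) dt denotes the upper incomplete gamma function. In particular, for m = 1 the value is 1/e. -/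
open MeasureTheory Real

/-- The upper incomplete gamma function `Γ_ic(a, y) = ∫_y^∞ t^(a−1) e^(−t) dt`. -/
noncomputable def upperIncompleteGamma (a y : ℝ) : ℝ :=
  ∫ t in Set.Ioi y, t ^ (a - 1) * Real.exp (-t)

/-!
With `γ(m, y) = Γ(m) - Γ_ic(m, y)`, the substitution `y = m x` turns the integral into
`(m Γ(m))⁻¹ ∫_0^m γ(m, y) dy`. Cauchy's formula for repeated integration, that is, integration by
parts against `m - t`, rewrites `∫_0^m γ(m, y) dy` as `∫_0^m (m - t) t^(m-1) e^(-t) dt`, whose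
integrand is the derivative of `t^m e^(-t)`.
-/

/-- The lower incomplete gamma function `γ(a, x) = ∫_0^x t^(a−1) e^(−t) dt`, the complement of
`upperIncompleteGamma a x` in `Real.Gamma a`. Encoding it as an interval integral makes it a
primitive of the gamma integrand. -/
noncomputable def lowerIncompleteGamma (a x : ℝ) : ℝ :=
  ∫ t in (0 : ℝ)..x, t ^ (a - 1) * Real.exp (-t)

theorem integral_primitive_eq_integral_sub_mul {f : ℝ → ℝ} {a b : ℝ}
    (hf : IntervalIntegrable f volume a b) :
    ∫ x in a..b, ∫ t in a..x, f t = ∫ t in a..b, (b - t) * f t := by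
  have hu : AbsolutelyContinuousOnInterval (fun x ↦ b - x) a b :=
    (by fun_prop : ContDiff ℝ 1 fun x ↦ b - x).contDiffOn.absolutelyContinuousOnInterval
  have hF : AbsolutelyContinuousOnInterval (fun x ↦ ∫ t in a..x, f t) a b :=
    hf.absolutelyContinuousOnInterval_intervalIntegral Set.left_mem_uIcc
  have hderiv : ∫ t in a..b, (b - t) * f t =
      ∫ t in a..b, (b - t) * deriv (fun x ↦ ∫ s in a..x, f s) t := by
    refine intervalIntegral.integral_congr_ae ?_
    filter_upwards [hf.ae_hasDerivAt_integral] with t ht htab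
    rw [(ht (Set.uIoc_subset_uIcc htab) a Set.left_mem_uIcc).deriv]
  rw [hderiv, hu.integral_mul_deriv_eq_deriv_mul hF]
  simp

theorem hasDerivAt_rpow_mul_exp_neg (a : ℝ) {t : ℝ} (ht : t ≠ 0) :
    HasDerivAt (fun t ↦ t ^ a * Real.exp (-t)) ((a - t) * (t ^ (a - 1) * Real.exp (-t))) t := by
  have hrpow : t ^ a = t ^ (a - 1) * t := by rw [← Real.rpow_add_one ht, sub_add_cancel]
  refine ((Real.hasDerivAt_rpow_const (Or.inl ht)).mul (hasDerivAt_neg t).exp).congr_deriv ?_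
  rw [hrpow]
  ring

section IncompleteGamma

variable {a x : ℝ}

theorem integrableOn_rpow_sub_one_mul_exp_neg (ha : 0 < a) :
    IntegrableOn (fun t ↦ t ^ (a - 1) * Real.exp (-t)) (Set.Ioi 0) := by
  simpa only [mul_comm] using Real.GammaIntegral_convergent ha

theorem intervalIntegrable_rpow_sub_one_mul_exp_neg (ha : 0 < a) (hx : 0 ≤ x) :
    IntervalIntegrable (fun t ↦ t ^ (a - 1) * Real.exp (-t)) volume 0 x :=
  (intervalIntegrable_iff_integrableOn_Ioc_of_le hx).2 <|
    (integrableOn_rpow_sub_one_mul_exp_neg ha).mono_set Set.Ioc_subset_Ioi_self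

theorem lowerIncompleteGamma_add_upperIncompleteGamma (ha : 0 < a) (hx : 0 ≤ x) :
    lowerIncompleteGamma a x + upperIncompleteGamma a x = Real.Gamma a := by
  have hint := integrableOn_rpow_sub_one_mul_exp_neg ha
  rw [lowerIncompleteGamma, upperIncompleteGamma, intervalIntegral.integral_interval_add_Ioi hint
    (hint.mono_set (Set.Ioi_subset_Ioi hx)), Real.Gamma_eq_integral ha]
  simp only [mul_comm]

theorem one_sub_upperIncompleteGamma_div_Gamma (ha : 0 < a) (hx : 0 ≤ x) :
    1 - upperIncompleteGamma a x / Real.Gamma a = lowerIncompleteGamma a x / Real.Gamma a := by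
  rw [one_sub_div (Real.Gamma_pos_of_pos ha).ne',
    ← lowerIncompleteGamma_add_upperIncompleteGamma ha hx, add_sub_cancel_right]

theorem integral_sub_mul_rpow_mul_exp_neg (ha : 0 < a) (hx : 0 ≤ x) :
    ∫ t in (0 : ℝ)..x, (a - t) * (t ^ (a - 1) * Real.exp (-t)) = x ^ a * Real.exp (-x) := by
  have hcont : Continuous fun t : ℝ ↦ t ^ a * Real.exp (-t) :=
    (Real.continuous_rpow_const ha.le).mul (by fun_prop)
  rw [intervalIntegral.integral_eq_sub_of_hasDerivAt_of_le hx hcont.continuousOn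
    (fun t ht ↦ hasDerivAt_rpow_mul_exp_neg a ht.1.ne')
    ((intervalIntegrable_rpow_sub_one_mul_exp_neg ha hx).continuousOn_mul (by fun_prop)),
    Real.zero_rpow ha.ne', zero_mul, sub_zero]

theorem integral_lowerIncompleteGamma (ha : 0 < a) (hx : 0 ≤ x) :
    ∫ y in (0 : ℝ)..x, lowerIncompleteGamma a y =
      (x - a) * lowerIncompleteGamma a x + x ^ a * Real.exp (-x) := by
  have hint := intervalIntegrable_rpow_sub_one_mul_exp_neg ha hx
  calc ∫ y in (0 : ℝ)..x, lowerIncompleteGamma a y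
    _ = ∫ t in (0 : ℝ)..x, (x - t) * (t ^ (a - 1) * Real.exp (-t)) :=
      integral_primitive_eq_integral_sub_mul hint
    _ = ∫ t in (0 : ℝ)..x, ((x - a) * (t ^ (a - 1) * Real.exp (-t)) +
          (a - t) * (t ^ (a - 1) * Real.exp (-t))) := by
      simp only [← add_mul, sub_add_sub_cancel]
    _ = (x - a) * lowerIncompleteGamma a x + x ^ a * Real.exp (-x) := by
      rw [intervalIntegral.integral_add (hint.const_mul _) (hint.continuousOn_mul (by fun_prop)),
        intervalIntegral.integral_const_mul, integral_sub_mul_rpow_mul_exp_neg ha hx,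
        lowerIncompleteGamma]

end IncompleteGamma

/-- The fraction of nodes leaving an interval due to Nakagami-`m` fading:
`∫₀¹ (1 − Γ_ic(m, m x)/Γ(m)) dx = (m^(m−1)/Γ(m)) e^(−m)`;
in particular, for `m = 1` the value is `1/e`. -/
theorem nakagami_cdf_integral (m : ℝ) (hm : 0 < m) :
    (∫ x in Set.Ioo (0 : ℝ) 1, (1 - upperIncompleteGamma m (m * x) / Real.Gamma m))
      = m ^ (m - 1) / Real.Gamma m * Real.exp (-m) ∧
    (m = 1 →
      (∫ x in Set.Ioo (0 : ℝ) 1, (1 - upperIncompleteGamma m (m * x) / Real.Gamma m))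
        = 1 / Real.exp 1) := by
  have hvalue : (∫ x in Set.Ioo (0 : ℝ) 1, (1 - upperIncompleteGamma m (m * x) / Real.Gamma m))
      = m ^ (m - 1) / Real.Gamma m * Real.exp (-m) := by
    calc ∫ x in Set.Ioo (0 : ℝ) 1, (1 - upperIncompleteGamma m (m * x) / Real.Gamma m)
      _ = ∫ x in Set.Ioo (0 : ℝ) 1, lowerIncompleteGamma m (m * x) / Real.Gamma m :=
        setIntegral_congr_fun measurableSet_Ioo fun x hx ↦
          one_sub_upperIncompleteGamma_div_Gamma hm (mul_nonneg hm.le hx.1.le)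
      _ = (∫ x in (0 : ℝ)..1, lowerIncompleteGamma m (m * x)) / Real.Gamma m := by
        rw [← integral_Ioc_eq_integral_Ioo, ← intervalIntegral.integral_of_le zero_le_one,
          intervalIntegral.integral_div]
      _ = m⁻¹ * (∫ y in (0 : ℝ)..m, lowerIncompleteGamma m y) / Real.Gamma m := by
        rw [intervalIntegral.integral_comp_mul_left _ hm.ne', mul_zero, mul_one, smul_eq_mul]
      _ = m ^ (m - 1) / Real.Gamma m * Real.exp (-m) := by
        rw [integral_lowerIncompleteGamma hm hm.le, Real.rpow_sub_one hm.ne']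
        ring
  refine ⟨hvalue, ?_⟩
  rintro rfl
  simpa [Real.exp_neg] using hvalue
end

section
/- Let δ > 0, m > 0, and s > 0 be real. Then (∫₀^∞ x^δ · Γ_ic(m, m·s·x) dx) / (∫₀^∞ x^(δ−1) · Γ_ic(m, m·s·x) dx) = δ·(δ + m)/(m·s·(δ + 1)), where Γ_ic(a, y) = ∫_y^∞ t^(a−1)·e^(−t) dt is the upper incomplete gamma function. In particular, this equals (1 + δ/m) times δ/(s·(δ+1)), the corresponding value without fading. -/
open MeasureTheory Real

/-!
For `0 < a`, exchanging the order of integration gives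
`∫₀^∞ x^(a-1) ∫_x^∞ f(t) dt dx = ∫₀^∞ (∫₀^t x^(a-1) dx) f(t) dt = a⁻¹ ∫₀^∞ t^a f(t) dt`.
For `f(t) = t^(m-1) e^(-t)` the right-hand side is `Γ(m+a)/a`, so after rescaling
`∫₀^∞ x^(a-1) Γ_ic(m, cx) dx = Γ(m+a)/(a c^a)`. The ratio of the values at `a = δ + 1` and `a = δ`
is then evaluated with `Γ(m+δ+1) = (m+δ) Γ(m+δ)`.
-/

section RpowIntegrals

variable {E : Type*} [NormedAddCommGroup E] [NormedSpace ℝ E] {a : ℝ}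

lemma integral_Ioi_rpow_smul_comp_mul_left (g : ℝ → E) {c : ℝ} (hc : 0 < c) :
    ∫ x in Set.Ioi (0 : ℝ), x ^ (a - 1) • g (c * x) =
      c ^ (-a) • ∫ x in Set.Ioi (0 : ℝ), x ^ (a - 1) • g x := by
  have pull_out : ∀ x ∈ Set.Ioi (0 : ℝ),
      x ^ (a - 1) • g (c * x) = c ^ (1 - a) • (c * x) ^ (a - 1) • g (c * x) := by
    intro x hx
    rw [smul_smul, mul_rpow hc.le (le_of_lt hx), ← mul_assoc, ← rpow_add hc,
      sub_add_sub_cancel, sub_self, rpow_zero, one_mul]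
  rw [setIntegral_congr_fun measurableSet_Ioi pull_out, integral_smul,
    integral_comp_mul_left_Ioi (fun y => y ^ (a - 1) • g y) 0 hc, mul_zero, smul_smul,
    ← rpow_neg_one, ← rpow_add hc]
  ring_nf

lemma integral_Ioo_rpow_sub_one (ha : 0 < a) {b : ℝ} (hb : 0 ≤ b) :
    ∫ x in Set.Ioo 0 b, x ^ (a - 1) = b ^ a / a := by
  rw [← integral_Ioc_eq_integral_Ioo, ← intervalIntegral.integral_of_le hb,
    integral_rpow (Or.inl (by linarith)), sub_add_cancel, zero_rpow ha.ne', sub_zero]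

lemma integrableOn_indicator_Iio_rpow_smul (ha : 0 < a) {t : ℝ} (ht : 0 < t) (v : E) :
    IntegrableOn ((Set.Iio t).indicator fun x => x ^ (a - 1) • v) (Set.Ioi 0) := by
  rw [IntegrableOn, integrable_indicator_iff measurableSet_Iio, IntegrableOn,
    Measure.restrict_restrict measurableSet_Iio, Set.Iio_inter_Ioi]
  exact ((intervalIntegral.integrableOn_Ioo_rpow_iff ht).2 (by linarith)).smul_const v

lemma integral_indicator_Iio_rpow_smul [CompleteSpace E] (ha : 0 < a) {t : ℝ} (ht : 0 < t)
    (v : E) :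
    ∫ x in Set.Ioi 0, (Set.Iio t).indicator (fun x => x ^ (a - 1) • v) x =
      a⁻¹ • t ^ a • v := by
  rw [setIntegral_indicator measurableSet_Iio, Set.Ioi_inter_Iio, integral_smul_const,
    integral_Ioo_rpow_sub_one ha ht.le, smul_smul, div_eq_inv_mul]

lemma aestronglyMeasurable_of_rpow_smul {f : ℝ → E}
    (hf : AEStronglyMeasurable (fun t => t ^ a • f t) (volume.restrict (Set.Ioi 0))) :
    AEStronglyMeasurable f (volume.restrict (Set.Ioi 0)) := by
  have hpow : Measurable fun t : ℝ => t ^ (-a) := by fun_prop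
  refine (hpow.aestronglyMeasurable.smul hf).congr ?_
  filter_upwards [ae_restrict_mem measurableSet_Ioi] with t ht
  change t ^ (-a) • t ^ a • f t = f t
  rw [smul_smul, ← rpow_add ht, neg_add_cancel, rpow_zero, one_smul]

lemma integrable_prod_indicator_lt_rpow_smul (ha : 0 < a) {f : ℝ → E}
    (hf : IntegrableOn (fun t => t ^ a • f t) (Set.Ioi 0)) :
    Integrable ({p : ℝ × ℝ | p.1 < p.2}.indicator fun p => p.1 ^ (a - 1) • f p.2)
      ((volume.restrict (Set.Ioi 0)).prod (volume.restrict (Set.Ioi 0))) := by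
  have hpow : Measurable fun p : ℝ × ℝ => p.1 ^ (a - 1) := by fun_prop
  have hmeas : AEStronglyMeasurable (fun p : ℝ × ℝ => p.1 ^ (a - 1) • f p.2)
      ((volume.restrict (Set.Ioi 0)).prod (volume.restrict (Set.Ioi 0))) :=
    hpow.aestronglyMeasurable.smul
      (aestronglyMeasurable_of_rpow_smul hf.aestronglyMeasurable).comp_snd
  have hlt : MeasurableSet {p : ℝ × ℝ | p.1 < p.2} := measurableSet_lt measurable_fst measurable_snd
  refine (integrable_prod_iff' (hmeas.indicator hlt)).2 ⟨?_, ?_⟩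
  · filter_upwards [ae_restrict_mem measurableSet_Ioi] with t ht
    exact integrableOn_indicator_Iio_rpow_smul ha ht (f t)
  · refine (hf.norm.const_mul a⁻¹).congr ?_
    filter_upwards [ae_restrict_mem measurableSet_Ioi] with t ht
    have norm_slice : ∀ x ∈ Set.Ioi (0 : ℝ),
        ‖{p : ℝ × ℝ | p.1 < p.2}.indicator (fun p => p.1 ^ (a - 1) • f p.2) (x, t)‖ =
          (Set.Iio t).indicator (fun x => x ^ (a - 1) • ‖f t‖) x := by
      intro x hx
      rw [norm_indicator_eq_indicator_norm]
      simp only [Set.indicator, Set.mem_ofPred_eq, Set.mem_Iio, norm_smul, smul_eq_mul,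
        norm_of_nonneg (rpow_nonneg (le_of_lt hx) (a - 1))]
    rw [setIntegral_congr_fun measurableSet_Ioi norm_slice,
      integral_indicator_Iio_rpow_smul ha ht, norm_smul,
      norm_of_nonneg (rpow_nonneg (le_of_lt ht) a), smul_eq_mul, smul_eq_mul]

theorem integral_Ioi_rpow_smul_integral_Ioi [CompleteSpace E] (ha : 0 < a) {f : ℝ → E}
    (hf : IntegrableOn (fun t => t ^ a • f t) (Set.Ioi 0)) :
    ∫ x in Set.Ioi (0 : ℝ), x ^ (a - 1) • ∫ t in Set.Ioi x, f t =
      a⁻¹ • ∫ t in Set.Ioi 0, t ^ a • f t := by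
  have tail_eq : ∀ x ∈ Set.Ioi (0 : ℝ),
      x ^ (a - 1) • ∫ t in Set.Ioi x, f t =
        ∫ t in Set.Ioi 0, (Set.Ioi x).indicator (fun t => x ^ (a - 1) • f t) t := by
    intro x hx
    rw [setIntegral_indicator measurableSet_Ioi,
      Set.inter_eq_right.2 (Set.Ioi_subset_Ioi (le_of_lt hx)), integral_smul]
  calc ∫ x in Set.Ioi (0 : ℝ), x ^ (a - 1) • ∫ t in Set.Ioi x, f t
      = ∫ x in Set.Ioi 0, ∫ t in Set.Ioi 0,
          (Set.Ioi x).indicator (fun t => x ^ (a - 1) • f t) t :=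
        setIntegral_congr_fun measurableSet_Ioi tail_eq
    _ = ∫ t in Set.Ioi 0, ∫ x in Set.Ioi 0,
          (Set.Iio t).indicator (fun x => x ^ (a - 1) • f t) x :=
        integral_integral_swap (integrable_prod_indicator_lt_rpow_smul ha hf)
    _ = ∫ t in Set.Ioi 0, a⁻¹ • t ^ a • f t :=
        setIntegral_congr_fun measurableSet_Ioi fun t ht =>
          integral_indicator_Iio_rpow_smul ha ht (f t)
    _ = a⁻¹ • ∫ t in Set.Ioi 0, t ^ a • f t := integral_smul _ _

end RpowIntegrals

section UpperIncompleteGamma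

variable {m a : ℝ}

lemma integral_rpow_mul_upperIncompleteGamma (ha : 0 < a) (hma : 0 < m + a) :
    ∫ x in Set.Ioi (0 : ℝ), x ^ (a - 1) * upperIncompleteGamma m x = Gamma (m + a) / a := by
  have integrand_eq : ∀ t ∈ Set.Ioi (0 : ℝ),
      exp (-t) * t ^ (m + a - 1) = t ^ a • (t ^ (m - 1) * exp (-t)) := by
    intro t ht
    rw [show m + a - 1 = a + (m - 1) by ring, rpow_add ht, smul_eq_mul]
    ring
  have hint : IntegrableOn (fun t => t ^ a • (t ^ (m - 1) * exp (-t))) (Set.Ioi 0) :=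
    (GammaIntegral_convergent hma).congr_fun integrand_eq measurableSet_Ioi
  calc ∫ x in Set.Ioi (0 : ℝ), x ^ (a - 1) * upperIncompleteGamma m x
      = a⁻¹ • ∫ t in Set.Ioi 0, t ^ a • (t ^ (m - 1) * exp (-t)) :=
        integral_Ioi_rpow_smul_integral_Ioi ha hint
    _ = Gamma (m + a) / a := by
        rw [← setIntegral_congr_fun measurableSet_Ioi integrand_eq, ← Gamma_eq_integral hma,
          smul_eq_mul, div_eq_inv_mul]

theorem integral_rpow_mul_upperIncompleteGamma_mul_left (ha : 0 < a) (hma : 0 < m + a) {c : ℝ}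
    (hc : 0 < c) :
    ∫ x in Set.Ioi (0 : ℝ), x ^ (a - 1) * upperIncompleteGamma m (c * x) =
      Gamma (m + a) / (a * c ^ a) := by
  have rescale := integral_Ioi_rpow_smul_comp_mul_left (a := a) (upperIncompleteGamma m) hc
  simp only [smul_eq_mul] at rescale
  rw [rescale, integral_rpow_mul_upperIncompleteGamma ha hma, rpow_neg hc.le, ← div_eq_inv_mul,
    div_div]

end UpperIncompleteGamma

theorem mean_connected_node_general {δ m c : ℝ} (hδ : 0 < δ) (hmδ : 0 < m + δ) (hc : 0 < c) :
    (∫ x in Set.Ioi (0 : ℝ), x ^ δ * upperIncompleteGamma m (c * x))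
        / (∫ x in Set.Ioi (0 : ℝ), x ^ (δ - 1) * upperIncompleteGamma m (c * x))
      = δ * (δ + m) / (c * (δ + 1)) := by
  have numerator : ∫ x in Set.Ioi (0 : ℝ), x ^ δ * upperIncompleteGamma m (c * x) =
      (m + δ) * Gamma (m + δ) / ((δ + 1) * (c ^ δ * c)) := by
    rw [← Gamma_add_one hmδ.ne', ← rpow_add_one hc.ne', add_assoc,
      ← integral_rpow_mul_upperIncompleteGamma_mul_left (by positivity) (by linarith) hc,
      add_sub_cancel_right]
  rw [numerator, integral_rpow_mul_upperIncompleteGamma_mul_left hδ hmδ hc]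
  have hGamma : Gamma (m + δ) ≠ 0 := (Gamma_pos_of_pos hmδ).ne'
  have hpow : c ^ δ ≠ 0 := (rpow_pos_of_pos hc δ).ne'
  field_simp
  ring

/-- The mean path loss of a uniformly randomly chosen connected node under Nakagami-`m`
fading equals `δ(δ + m)/(m s (δ + 1))`, which is `(1 + δ/m)` times the value `δ/(s(δ+1))`
without fading. -/
theorem mean_connected_node (δ m s : ℝ) (hδ : 0 < δ) (hm : 0 < m) (hs : 0 < s) :
    (∫ x in Set.Ioi (0 : ℝ), x ^ δ * upperIncompleteGamma m (m * s * x))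
        / (∫ x in Set.Ioi (0 : ℝ), x ^ (δ - 1) * upperIncompleteGamma m (m * s * x))
      = δ * (δ + m) / (m * s * (δ + 1)) ∧
    δ * (δ + m) / (m * s * (δ + 1)) = (1 + δ / m) * (δ / (s * (δ + 1))) :=
  ⟨mean_connected_node_general hδ (add_pos hm hδ) (mul_pos hm hs), by field_simp; ring⟩
end

section
/- Let m be a positive integer and s̃ > 0 a real number, and let p_m(s̃) = ∫₀¹ Γ_ic(m, m·s̃·x)/Γ(m) dx with Γ_ic(a, y) = ∫_y^∞ t^(a−1)·e^(−t) dt. Then max{0, 1 − m^m·s̃^m/Γ(m+2)} < p_m(s̃) ≤ min{1, (1/s̃)·(1 − e^(−m·s̃)·(1 + (m−1)·s̃))}. -/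
open MeasureTheory Real

/-- The probability `p_m(s̃) = ∫₀¹ Γ_ic(m, m s̃ x)/Γ(m) dx` that a randomly chosen node
in `[0, a)` can be reached, where `s̃ = a s`. -/
noncomputable def broadcastReachProb (m : ℕ) (st : ℝ) : ℝ :=
  ∫ x in Set.Ioo (0 : ℝ) 1, upperIncompleteGamma m ((m : ℝ) * st * x) / Real.Gamma m

/-!
With `z = m s`, substituting `y = z x` gives `p_m(s) = (∫₀ᶻ Γ(m, y) dy) / (z Γ(m))`, so that
`0 < Γ(a, y) ≤ Γ(a)` yields `0 < p_m ≤ 1`. Bounding `e^(-t)` by `1` in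
`Γ(a) - Γ(a, y) = ∫₀ʸ t^(a-1) e^(-t) dt` gives `Γ(a, y) > Γ(a) - y^a / a`, which integrates to the
other lower bound.

For the other upper bound, `y Γ(a, y) - Γ(a + 1, y)` is an antiderivative of `Γ(a, y)`, and for
integral `a = m` the recurrence in `a` turns this into
`p_m(s) = (1 - e^(-z) ∑_{k < m} (1 - k / m) z^k / k!) / s`. The terms of the sum are nonnegative,
and those with `k ≤ 1` add up to `1 + (m - 1) s`.
-/

section UpperIncompleteGamma

variable {a y z : ℝ}

lemma intervalIntegrable_rpow_mul_exp_neg (ha : 0 < a) (b c : ℝ) :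
    IntervalIntegrable (fun t ↦ t ^ (a - 1) * exp (-t)) volume b c :=
  (intervalIntegral.intervalIntegrable_rpow' (by linarith)).mul_continuousOn (by fun_prop)

lemma upperIncompleteGamma_zero (ha : 0 < a) : upperIncompleteGamma a 0 = Gamma a := by
  simp only [upperIncompleteGamma, Gamma_eq_integral ha, mul_comm]

lemma upperIncompleteGamma_one (y : ℝ) : upperIncompleteGamma 1 y = exp (-y) := by
  simp only [upperIncompleteGamma, sub_self, rpow_zero, one_mul, integral_exp_neg_Ioi]

lemma integrableOn_Ioi_rpow_mul_exp_neg (ha : 0 < a) (y : ℝ) :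
    IntegrableOn (fun t ↦ t ^ (a - 1) * exp (-t)) (Set.Ioi y) := by
  have hzero : IntegrableOn (fun t ↦ t ^ (a - 1) * exp (-t)) (Set.Ioi 0) := by
    simpa only [mul_comm] using GammaIntegral_convergent ha
  refine ((intervalIntegrable_rpow_mul_exp_neg ha y 0).1.union hzero).mono_set ?_
  exact Set.Ioi_subset_Ioc_union_Ioi

lemma upperIncompleteGamma_eq_Gamma_sub_integral (ha : 0 < a) (y : ℝ) :
    upperIncompleteGamma a y = Gamma a - ∫ t in (0 : ℝ)..y, t ^ (a - 1) * exp (-t) := by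
  rw [← upperIncompleteGamma_zero ha, eq_sub_iff_add_eq, add_comm]
  exact intervalIntegral.integral_interval_add_Ioi
    (integrableOn_Ioi_rpow_mul_exp_neg ha 0) (integrableOn_Ioi_rpow_mul_exp_neg ha y)

lemma continuous_upperIncompleteGamma (ha : 0 < a) : Continuous (upperIncompleteGamma a) := by
  rw [funext (upperIncompleteGamma_eq_Gamma_sub_integral ha)]
  exact continuous_const.sub
    (intervalIntegral.continuous_primitive (intervalIntegrable_rpow_mul_exp_neg ha) 0)

lemma hasDerivAt_upperIncompleteGamma (ha : 0 < a) (hy : y ≠ 0) :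
    HasDerivAt (upperIncompleteGamma a) (-(y ^ (a - 1) * exp (-y))) y := by
  rw [funext (upperIncompleteGamma_eq_Gamma_sub_integral ha)]
  refine (intervalIntegral.integral_hasDerivAt_right
    (intervalIntegrable_rpow_mul_exp_neg ha 0 y) ?_ ?_).const_sub _
  · exact Measurable.stronglyMeasurable (by fun_prop) |>.stronglyMeasurableAtFilter
  · exact (continuousAt_rpow_const y _ (Or.inl hy)).mul (by fun_prop)

lemma upperIncompleteGamma_pos (ha : 0 < a) (hy : 0 ≤ y) : 0 < upperIncompleteGamma a y := by
  have hpos : ∀ t ∈ Set.Ioi y, 0 < t ^ (a - 1) * exp (-t) := fun t ht ↦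
    mul_pos (rpow_pos_of_pos (hy.trans_lt ht) _) (exp_pos _)
  rw [upperIncompleteGamma, setIntegral_pos_iff_support_of_nonneg_ae
    (ae_restrict_of_forall_mem measurableSet_Ioi fun t ht ↦ (hpos t ht).le)
    (integrableOn_Ioi_rpow_mul_exp_neg ha y)]
  have hsupport : Set.Ioi y ⊆ Function.support fun t ↦ t ^ (a - 1) * exp (-t) :=
    fun t ht ↦ (hpos t ht).ne'
  rw [Set.inter_eq_right.mpr hsupport, volume_Ioi]
  exact ENNReal.zero_lt_top

lemma upperIncompleteGamma_le_Gamma (ha : 0 < a) (hy : 0 ≤ y) :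
    upperIncompleteGamma a y ≤ Gamma a := by
  rw [upperIncompleteGamma_eq_Gamma_sub_integral ha]
  refine sub_le_self _ (intervalIntegral.integral_nonneg hy fun t ht ↦ ?_)
  exact mul_nonneg (rpow_nonneg ht.1 _) (exp_pos _).le

lemma Gamma_sub_rpow_div_lt_upperIncompleteGamma (ha : 0 < a) (hy : 0 < y) :
    Gamma a - y ^ a / a < upperIncompleteGamma a y := by
  have hrpow : IntervalIntegrable (fun t : ℝ ↦ t ^ (a - 1)) volume 0 y :=
    intervalIntegral.intervalIntegrable_rpow' (by linarith)
  have hexp := intervalIntegrable_rpow_mul_exp_neg ha 0 y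
  have hdiff : 0 < ∫ t in (0 : ℝ)..y, (t ^ (a - 1) - t ^ (a - 1) * exp (-t)) := by
    refine intervalIntegral.intervalIntegral_pos_of_pos_on (hrpow.sub hexp) (fun t ht ↦ ?_) hy
    have hexp_lt : exp (-t) < 1 := exp_lt_one_iff.mpr (neg_lt_zero.mpr ht.1)
    exact sub_pos.mpr (mul_lt_of_lt_one_right (rpow_pos_of_pos ht.1 _) hexp_lt)
  have hint : ∫ t in (0 : ℝ)..y, t ^ (a - 1) = y ^ a / a := by
    rw [integral_rpow (Or.inl (by linarith)), sub_add_cancel, zero_rpow ha.ne', sub_zero]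
  rw [intervalIntegral.integral_sub hrpow hexp, hint] at hdiff
  rw [upperIncompleteGamma_eq_Gamma_sub_integral ha]
  linarith

lemma upperIncompleteGamma_add_one (ha : 0 < a) (hy : 0 ≤ y) :
    upperIncompleteGamma (a + 1) y = a * upperIncompleteGamma a y + y ^ a * exp (-y) := by
  have hsucc : IntervalIntegrable (fun t : ℝ ↦ t ^ a * exp (-t)) volume 0 y := by
    simpa only [add_sub_cancel_right] using
      intervalIntegrable_rpow_mul_exp_neg (by linarith : 0 < a + 1) 0 y
  have hself := (intervalIntegrable_rpow_mul_exp_neg ha 0 y).const_mul a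
  have hparts : ∫ t in (0 : ℝ)..y, (a * (t ^ (a - 1) * exp (-t)) - t ^ a * exp (-t)) =
      y ^ a * exp (-y) - 0 ^ a * exp (-0) := by
    refine intervalIntegral.integral_eq_sub_of_hasDerivAt_of_le
      (f := fun t ↦ t ^ a * exp (-t)) hy ?_ (fun t ht ↦ ?_) (hself.sub hsucc)
    · exact ((continuous_rpow_const ha.le).mul (by fun_prop)).continuousOn
    · refine ((hasDerivAt_rpow_const (p := a) (Or.inl ht.1.ne')).mul
        (hasDerivAt_neg t).exp).congr_deriv ?_
      ring
  rw [intervalIntegral.integral_sub hself hsucc, intervalIntegral.integral_const_mul,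
    zero_rpow ha.ne'] at hparts
  rw [upperIncompleteGamma_eq_Gamma_sub_integral (by linarith : 0 < a + 1),
    upperIncompleteGamma_eq_Gamma_sub_integral ha, Gamma_add_one ha.ne', add_sub_cancel_right]
  linarith

lemma upperIncompleteGamma_natCast {m : ℕ} (hm : 0 < m) (hy : 0 ≤ y) :
    upperIncompleteGamma m y =
      Gamma m * (exp (-y) * ∑ k ∈ Finset.range m, y ^ k / k.factorial) := by
  induction m, hm using Nat.le_induction with
  | base => simp [upperIncompleteGamma_one]
  | succ m hm ih =>
    have hm0 : (0 : ℝ) < m := mod_cast hm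
    have hfac : Gamma (m + 1) * (y ^ m / m.factorial) = y ^ m := by
      rw [Gamma_nat_eq_factorial, mul_div_cancel₀ _ (by positivity)]
    rw [Nat.cast_succ, upperIncompleteGamma_add_one hm0 hy, ih, rpow_natCast,
      Finset.sum_range_succ, mul_add, mul_add, mul_left_comm _ _ (y ^ m / _), hfac,
      Gamma_add_one hm0.ne']
    ring

lemma integral_upperIncompleteGamma (ha : 0 < a) (hz : 0 ≤ z) :
    ∫ y in (0 : ℝ)..z, upperIncompleteGamma a y =
      z * upperIncompleteGamma a z + Gamma (a + 1) - upperIncompleteGamma (a + 1) z := by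
  have ha1 : 0 < a + 1 := by linarith
  have hcont := continuous_upperIncompleteGamma ha
  have hcont1 := continuous_upperIncompleteGamma ha1
  rw [intervalIntegral.integral_eq_sub_of_hasDerivAt_of_le hz
    (f := fun y ↦ y * upperIncompleteGamma a y - upperIncompleteGamma (a + 1) y)
    (by fun_prop) (fun y hy ↦ ?_) (hcont.intervalIntegrable _ _), upperIncompleteGamma_zero ha1]
  · ring
  · have hy0 : y ≠ 0 := hy.1.ne'
    refine (((hasDerivAt_id y).mul (hasDerivAt_upperIncompleteGamma ha hy0)).sub
      (hasDerivAt_upperIncompleteGamma ha1 hy0)).congr_deriv ?_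
    rw [add_sub_cancel_right, rpow_sub_one hy0]
    simp only [id]
    field_simp
    ring

lemma integral_upperIncompleteGamma_pos (ha : 0 < a) (hz : 0 < z) :
    0 < ∫ y in (0 : ℝ)..z, upperIncompleteGamma a y :=
  intervalIntegral.intervalIntegral_pos_of_pos_on
    ((continuous_upperIncompleteGamma ha).intervalIntegrable _ _)
    (fun _ hy ↦ upperIncompleteGamma_pos ha hy.1.le) hz

lemma integral_upperIncompleteGamma_le (ha : 0 < a) (hz : 0 ≤ z) :
    ∫ y in (0 : ℝ)..z, upperIncompleteGamma a y ≤ z * Gamma a := by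
  have hle := intervalIntegral.integral_mono_on hz
    ((continuous_upperIncompleteGamma ha).intervalIntegrable 0 z)
    (continuous_const.intervalIntegrable (μ := volume) 0 z)
    (fun y hy ↦ upperIncompleteGamma_le_Gamma ha hy.1)
  simpa only [intervalIntegral.integral_const, sub_zero, smul_eq_mul] using hle

lemma sub_rpow_div_lt_integral_upperIncompleteGamma (ha : 0 < a) (hz : 0 < z) :
    z * Gamma a - z ^ (a + 1) / (a * (a + 1)) <
      ∫ y in (0 : ℝ)..z, upperIncompleteGamma a y := by
  have hrpow : Continuous fun y : ℝ ↦ y ^ a := continuous_rpow_const ha.le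
  have hint : ∫ y in (0 : ℝ)..z, (Gamma a - y ^ a / a) =
      z * Gamma a - z ^ (a + 1) / (a * (a + 1)) := by
    rw [intervalIntegral.integral_sub (by simp) ((hrpow.div_const a).intervalIntegrable 0 z),
      intervalIntegral.integral_const, intervalIntegral.integral_div,
      integral_rpow (Or.inl (by linarith)), zero_rpow (by linarith), sub_zero, sub_zero,
      smul_eq_mul, div_div, mul_comm (a + 1)]
  rw [← hint]
  exact intervalIntegral.integral_lt_integral_of_continuousOn_of_le_of_exists_lt hz
    (by fun_prop) (continuous_upperIncompleteGamma ha).continuousOn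
    (fun y hy ↦ (Gamma_sub_rpow_div_lt_upperIncompleteGamma ha hy.1).le)
    ⟨z, Set.right_mem_Icc.mpr hz.le, Gamma_sub_rpow_div_lt_upperIncompleteGamma ha hz⟩

end UpperIncompleteGamma

lemma sum_range_sub_mul_pow_div_factorial {K : Type*} [Field K] [CharZero K] (m : ℕ) (z : K) :
    ∑ k ∈ Finset.range m, (m - k : K) * (z ^ k / k.factorial) =
      m * ∑ k ∈ Finset.range (m + 1), z ^ k / k.factorial -
        z * ∑ k ∈ Finset.range m, z ^ k / k.factorial := by
  have hshift : z * ∑ k ∈ Finset.range m, z ^ k / k.factorial =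
      ∑ k ∈ Finset.range (m + 1), (k : K) * (z ^ k / k.factorial) := by
    rw [Finset.sum_range_succ', Nat.cast_zero, zero_mul, add_zero, Finset.mul_sum]
    refine Finset.sum_congr rfl fun k _ ↦ ?_
    have hk : (k : K) + 1 ≠ 0 := Nat.cast_add_one_ne_zero k
    rw [Nat.factorial_succ, Nat.cast_mul, Nat.cast_succ, pow_succ']
    field_simp
  rw [hshift, Finset.mul_sum, ← Finset.sum_sub_distrib]
  simp only [← sub_mul]
  rw [Finset.sum_range_succ, sub_self, zero_mul, add_zero]

lemma add_mul_le_sum_range_sub_mul_pow_div_factorial (m : ℕ) {z : ℝ} (hz : 0 ≤ z) :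
    m + (m - 1) * z ≤ ∑ k ∈ Finset.range m, (m - k : ℝ) * (z ^ k / k.factorial) := by
  rcases lt_or_ge m 2 with hm | hm
  · interval_cases m <;> simp [hz]
  calc m + (m - 1) * z
      = ∑ k ∈ Finset.range 2, (m - k : ℝ) * (z ^ k / k.factorial) := by
        simp [Finset.sum_range_succ]
    _ ≤ ∑ k ∈ Finset.range m, (m - k : ℝ) * (z ^ k / k.factorial) := by
        refine Finset.sum_le_sum_of_subset_of_nonneg (Finset.range_subset_range.mpr hm)
          fun k hk _ ↦ mul_nonneg (sub_nonneg.mpr ?_) (by positivity)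
        exact mod_cast (Finset.mem_range.mp hk).le

section BroadcastReachProb

variable {m : ℕ} {s : ℝ}

lemma broadcastReachProb_eq_integral (hm : 0 < m) (hs : s ≠ 0) :
    broadcastReachProb m s =
      (∫ y in (0 : ℝ)..m * s, upperIncompleteGamma m y) / (m * s * Gamma m) := by
  have hz : (m : ℝ) * s ≠ 0 := mul_ne_zero (mod_cast hm.ne') hs
  rw [broadcastReachProb, ← integral_Ioc_eq_integral_Ioo,
    ← intervalIntegral.integral_of_le zero_le_one, intervalIntegral.integral_div,
    intervalIntegral.integral_comp_mul_left _ hz, mul_zero, mul_one, smul_eq_mul,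
    inv_mul_eq_div, div_div]

lemma broadcastReachProb_eq_one_sub_exp_mul_sum (hm : 0 < m) (hs : 0 < s) :
    broadcastReachProb m s = 1 / s * (1 - exp (-(m * s)) *
      ((∑ k ∈ Finset.range m, (m - k) * ((m * s) ^ k / k.factorial)) / m)) := by
  have hm0 : (0 : ℝ) < m := mod_cast hm
  have hz : 0 ≤ m * s := by positivity
  have hGamma := (Gamma_pos_of_pos hm0).ne'
  rw [broadcastReachProb_eq_integral hm hs.ne', integral_upperIncompleteGamma hm0 hz,
    ← Nat.cast_succ, upperIncompleteGamma_natCast hm hz,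
    upperIncompleteGamma_natCast m.succ_pos hz, Nat.cast_succ, Gamma_add_one hm0.ne',
    sum_range_sub_mul_pow_div_factorial]
  field_simp
  ring

lemma broadcastReachProb_pos (hm : 0 < m) (hs : 0 < s) : 0 < broadcastReachProb m s := by
  have hm0 : (0 : ℝ) < m := mod_cast hm
  have hz : 0 < m * s := by positivity
  rw [broadcastReachProb_eq_integral hm hs.ne']
  exact div_pos (integral_upperIncompleteGamma_pos hm0 hz) (mul_pos hz (Gamma_pos_of_pos hm0))

lemma broadcastReachProb_le_one (hm : 0 < m) (hs : 0 < s) : broadcastReachProb m s ≤ 1 := by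
  have hm0 : (0 : ℝ) < m := mod_cast hm
  have hz : 0 < m * s := by positivity
  rw [broadcastReachProb_eq_integral hm hs.ne', div_le_one (mul_pos hz (Gamma_pos_of_pos hm0))]
  exact integral_upperIncompleteGamma_le hm0 hz.le

lemma one_sub_div_Gamma_lt_broadcastReachProb (hm : 0 < m) (hs : 0 < s) :
    1 - m ^ m * s ^ m / Gamma (m + 2) < broadcastReachProb m s := by
  have hm0 : (0 : ℝ) < m := mod_cast hm
  have hz : 0 < m * s := by positivity
  have hGamma := Gamma_pos_of_pos hm0
  have hGamma_add_two : Gamma (m + 2) = (m + 1) * (m * Gamma m) := by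
    rw [← one_add_one_eq_two, ← add_assoc, Gamma_add_one (by positivity), Gamma_add_one hm0.ne']
  rw [broadcastReachProb_eq_integral hm hs.ne', lt_div_iff₀ (mul_pos hz hGamma)]
  calc (1 - m ^ m * s ^ m / Gamma (m + 2)) * (m * s * Gamma m)
      = m * s * Gamma m - (m * s) ^ (m + 1 : ℝ) / (m * (m + 1)) := by
        rw [hGamma_add_two, rpow_add_one hz.ne', rpow_natCast, mul_pow]
        field_simp
    _ < ∫ y in (0 : ℝ)..m * s, upperIncompleteGamma m y :=
        sub_rpow_div_lt_integral_upperIncompleteGamma hm0 hz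

lemma broadcastReachProb_le_truncation (hm : 0 < m) (hs : 0 < s) :
    broadcastReachProb m s ≤ 1 / s * (1 - exp (-(m * s)) * (1 + (m - 1) * s)) := by
  have hm0 : (0 : ℝ) < m := mod_cast hm
  rw [broadcastReachProb_eq_one_sub_exp_mul_sum hm hs]
  gcongr
  rw [le_div_iff₀ hm0]
  calc (1 + (m - 1) * s) * m = m + (m - 1) * (m * s) := by ring
    _ ≤ ∑ k ∈ Finset.range m, (m - k) * ((m * s) ^ k / k.factorial) :=
        add_mul_le_sum_range_sub_mul_pow_div_factorial m (by positivity)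

end BroadcastReachProb

/-- Bounds on the broadcast reachability probability:
`max{0, 1 − m^m s̃^m/Γ(m+2)} < p_m(s̃) ≤ min{1, (1/s̃)(1 − e^(−m s̃)(1 + (m−1)s̃))}`. -/
theorem broadcast_reach_prob_bounds (m : ℕ) (hm : 0 < m) (st : ℝ) (hst : 0 < st) :
    max 0 (1 - (m : ℝ) ^ m * st ^ m / Real.Gamma ((m : ℝ) + 2)) < broadcastReachProb m st ∧
    broadcastReachProb m st
      ≤ min 1 ((1 / st) * (1 - Real.exp (-((m : ℝ) * st)) * (1 + ((m : ℝ) - 1) * st))) :=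
  ⟨max_lt (broadcastReachProb_pos hm hst) (one_sub_div_Gamma_lt_broadcastReachProb hm hst),
    le_min (broadcastReachProb_le_one hm hst) (broadcastReachProb_le_truncation hm hst)⟩
end

section
/- Let m > 0 and c > 0 be real, and define g(x) = m^(m+1)·c/(m + c·x)^(m+1) for x > 0. Then g is a probability density on (0, ∞) (i.e., ∫₀^∞ g(x) dx = 1), and its differential entropy satisfies −∫₀^∞ g(x)·ln(g(x)) dx = 1 + 1/m − ln c. -/
open MeasureTheory Real

/-!
The substitution `u = x + m / c` turns `g` into the density `r t ^ r u ^ (-(r + 1))`, `u ≥ t`, of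
the Pareto distribution with scale `t = m / c` and rate `r = m`. The logarithm of that density is
affine in `log u`, so its entropy is determined by the mean of `log u`, which is `log t + 1 / r`.
-/

open Set Filter Topology ProbabilityTheory

section LogMoment

variable {a t x : ℝ}

lemma tendsto_rpow_mul_log_atTop (ha : a < 0) :
    Tendsto (fun x : ℝ ↦ x ^ a * log x) atTop (𝓝 0) := by
  refine (isLittleO_log_rpow_atTop (neg_pos.2 ha)).tendsto_div_nhds_zero.congr' ?_
  filter_upwards [eventually_gt_atTop 0] with x hx
  rw [rpow_neg hx.le, div_inv_eq_mul, mul_comm]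

lemma hasDerivAt_rpow_add_one_mul_log_sub (ha : a ≠ -1) (hx : 0 < x) :
    HasDerivAt (fun x : ℝ ↦ (x ^ (a + 1) * log x - x ^ (a + 1) / (a + 1)) / (a + 1))
      (x ^ a * log x) x := by
  have ha' : a + 1 ≠ 0 := by rwa [Ne, add_eq_zero_iff_eq_neg]
  have hpow : HasDerivAt (fun x : ℝ ↦ x ^ (a + 1)) ((a + 1) * x ^ a) x := by
    simpa using hasDerivAt_rpow_const (p := a + 1) (Or.inl hx.ne')
  refine (((hpow.mul (hasDerivAt_log hx.ne')).sub (hpow.div_const (a + 1))).div_const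
    (a + 1)).congr_deriv ?_
  rw [rpow_add_one hx.ne']
  field_simp
  ring

lemma integrableOn_Ioi_rpow_mul_log (ha : a < -1) (ht : 0 < t) :
    IntegrableOn (fun x : ℝ ↦ x ^ a * log x) (Ioi t) := by
  obtain ⟨b, hab, hb⟩ := exists_between ha
  have hcont : ContinuousOn (fun x : ℝ ↦ x ^ a * log x) (Ici t) := fun x hx ↦
    have hx₀ : x ≠ 0 := (ht.trans_le hx).ne'
    ((continuousAt_rpow_const x a (Or.inl hx₀)).mul (continuousAt_log hx₀)).continuousWithinAt
  have hbigO : (fun x : ℝ ↦ x ^ a * log x) =O[atTop] fun x ↦ x ^ b := by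
    refine ((Asymptotics.isBigO_refl (fun x : ℝ ↦ x ^ a) atTop).mul
      (isLittleO_log_rpow_atTop (sub_pos.2 hab)).isBigO).congr' .rfl ?_
    filter_upwards [eventually_gt_atTop 0] with x hx
    rw [← rpow_add hx, add_sub_cancel]
  exact ((hcont.locallyIntegrableOn measurableSet_Ici).integrableOn_of_isBigO_atTop hbigO
    (integrableAtFilter_rpow_atTop_iff.2 hb)).mono_set Ioi_subset_Ici_self

lemma integral_Ioi_rpow_mul_log (ha : a < -1) (ht : 0 < t) :
    ∫ x in Ioi t, x ^ a * log x = (t ^ (a + 1) / (a + 1) - t ^ (a + 1) * log t) / (a + 1) := by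
  have ha' : a + 1 < 0 := by linarith
  have hpow : Tendsto (fun x : ℝ ↦ x ^ (a + 1)) atTop (𝓝 0) := by
    simpa using tendsto_rpow_neg_atTop (neg_pos.2 ha')
  have hlim := ((tendsto_rpow_mul_log_atTop ha').sub (hpow.div_const (a + 1))).div_const (a + 1)
  rw [integral_Ioi_of_hasDerivAt_of_tendsto'
    (fun x hx ↦ hasDerivAt_rpow_add_one_mul_log_sub ha.ne (ht.trans_le hx))
    (integrableOn_Ioi_rpow_mul_log ha ht) hlim]
  ring

end LogMoment

section Substitution

variable {E : Type*} [NormedAddCommGroup E] [NormedSpace ℝ E]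

lemma integral_Ioi_comp_add_right (f : ℝ → E) (a b : ℝ) :
    ∫ x in Ioi a, f (x + b) = ∫ x in Ioi (a + b), f x := by
  simpa using (measurePreserving_add_right volume b).setIntegral_preimage_emb
    (measurableEmbedding_addRight b) f (Ioi (a + b))

lemma integral_comp_paretoPDFReal_eq_integral_Ioi {φ : ℝ → E} (hφ : φ 0 = 0) (t r : ℝ) :
    ∫ x, φ (paretoPDFReal t r x) = ∫ x in Ioi t, φ (paretoPDFReal t r x) := by
  rw [← integral_Ici_eq_integral_Ioi, setIntegral_eq_integral_of_forall_compl_eq_zero]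
  intro x (hx : ¬ t ≤ x)
  rw [paretoPDFReal, if_neg hx, hφ]

lemma integral_Ioi_zero_comp_paretoPDFReal_add {φ : ℝ → E} (hφ : φ 0 = 0) (t r : ℝ) :
    ∫ x in Ioi 0, φ (paretoPDFReal t r (x + t)) = ∫ x, φ (paretoPDFReal t r x) := by
  rw [integral_comp_paretoPDFReal_eq_integral_Ioi hφ,
    integral_Ioi_comp_add_right (fun x ↦ φ (paretoPDFReal t r x)), zero_add]

end Substitution

section ParetoEntropy

variable {t r : ℝ}

lemma integral_paretoPDFReal (ht : 0 < t) (hr : 0 < r) : ∫ x, paretoPDFReal t r x = 1 := by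
  rw [integral_eq_lintegral_of_nonneg_ae (ae_of_all _ (paretoPDFReal_nonneg ht.le hr.le))
    (by fun_prop)]
  exact (congrArg ENNReal.toReal (lintegral_paretoPDF_eq_one ht hr)).trans ENNReal.toReal_one

lemma integrable_paretoPDFReal (ht : 0 < t) (hr : 0 < r) : Integrable (paretoPDFReal t r) :=
  .of_integral_ne_zero (by simp [integral_paretoPDFReal ht hr])

lemma paretoPDFReal_mul_eq_indicator (t r : ℝ) (f : ℝ → ℝ) :
    (fun x ↦ paretoPDFReal t r x * f x) =
      (Ici t).indicator fun x ↦ r * t ^ r * (x ^ (-(r + 1)) * f x) := by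
  ext x
  simp only [paretoPDFReal, indicator_apply, mem_Ici, ite_mul, zero_mul, mul_assoc]

lemma integrable_paretoPDFReal_mul_log (ht : 0 < t) (hr : 0 < r) :
    Integrable fun x ↦ paretoPDFReal t r x * log x := by
  rw [paretoPDFReal_mul_eq_indicator, integrable_indicator_iff measurableSet_Ici,
    integrableOn_Ici_iff_integrableOn_Ioi]
  exact (integrableOn_Ioi_rpow_mul_log (by linarith) ht).const_mul _

lemma integral_paretoPDFReal_mul_log (ht : 0 < t) (hr : 0 < r) :
    ∫ x, paretoPDFReal t r x * log x = log t + 1 / r := by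
  rw [paretoPDFReal_mul_eq_indicator, integral_indicator measurableSet_Ici,
    integral_Ici_eq_integral_Ioi, integral_const_mul,
    integral_Ioi_rpow_mul_log (by linarith) ht, show -(r + 1) + 1 = -r by ring, rpow_neg ht.le]
  field_simp
  ring

lemma negMulLog_paretoPDFReal (ht : 0 < t) (r x : ℝ) :
    negMulLog (paretoPDFReal t r x) =
      (r + 1) * (paretoPDFReal t r x * log x) - log (r * t ^ r) * paretoPDFReal t r x := by
  rw [paretoPDFReal]
  split_ifs with hx
  · rw [negMulLog_mul, negMulLog, negMulLog, log_rpow (ht.trans_le hx)]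
    ring
  · simp

lemma integral_negMulLog_paretoPDFReal (ht : 0 < t) (hr : 0 < r) :
    ∫ x, negMulLog (paretoPDFReal t r x) = log (t / r) + 1 + 1 / r := by
  calc ∫ x, negMulLog (paretoPDFReal t r x)
    _ = (r + 1) * (∫ x, paretoPDFReal t r x * log x) -
          log (r * t ^ r) * ∫ x, paretoPDFReal t r x := by
      simp only [negMulLog_paretoPDFReal ht]
      rw [integral_sub ((integrable_paretoPDFReal_mul_log ht hr).const_mul _)
        ((integrable_paretoPDFReal ht hr).const_mul _), integral_const_mul, integral_const_mul]
    _ = (r + 1) * (log t + 1 / r) - (log r + r * log t) := by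
      rw [integral_paretoPDFReal_mul_log ht hr, integral_paretoPDFReal ht hr, mul_one,
        log_mul hr.ne' (by positivity), log_rpow ht]
    _ = log (t / r) + 1 + 1 / r := by
      rw [log_div ht.ne' hr.ne']
      field_simp
      ring

end ParetoEntropy

lemma paretoPDFReal_add_scale {m c x : ℝ} (hm : 0 < m) (hc : 0 < c) (hx : 0 ≤ x) :
    paretoPDFReal (m / c) m (x + m / c) = m ^ (m + 1) * c / (m + c * x) ^ (m + 1) := by
  have hshift : x + m / c = (m + c * x) / c := by field_simp; ring
  have hpos : 0 < m + c * x := by positivity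
  rw [paretoPDFReal, if_pos (le_add_of_nonneg_left hx), hshift, rpow_neg (by positivity),
    div_rpow hm.le hc.le, div_rpow hpos.le hc.le, rpow_add_one hm.ne', rpow_add_one hc.ne']
  field_simp

/-- The density `g(x) = m^(m+1) c/(m + c x)^(m+1)` of the path loss with fading of the
nearest node (`δ = 1`, Nakagami-`m` fading) integrates to `1` on `(0, ∞)`, and its
differential entropy is `h(g) = −∫₀^∞ g ln g = 1 + 1/m − ln c`. -/
theorem nearest_node_entropy (m c : ℝ) (hm : 0 < m) (hc : 0 < c) :
    (∫ x in Set.Ioi (0 : ℝ), m ^ (m + 1) * c / (m + c * x) ^ (m + 1) = 1) ∧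
    (-∫ x in Set.Ioi (0 : ℝ),
        (m ^ (m + 1) * c / (m + c * x) ^ (m + 1)) *
          Real.log (m ^ (m + 1) * c / (m + c * x) ^ (m + 1))
      = 1 + 1 / m - Real.log c) := by
  have ht : 0 < m / c := div_pos hm hc
  have hpareto : ∀ φ : ℝ → ℝ, φ 0 = 0 →
      ∫ x in Ioi 0, φ (m ^ (m + 1) * c / (m + c * x) ^ (m + 1)) =
        ∫ x, φ (paretoPDFReal (m / c) m x) := fun φ hφ ↦ by
    rw [← integral_Ioi_zero_comp_paretoPDFReal_add hφ]
    exact setIntegral_congr_fun measurableSet_Ioi fun x hx ↦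
      congrArg φ (paretoPDFReal_add_scale hm hc (le_of_lt hx)).symm
  constructor
  · exact (hpareto id rfl).trans (integral_paretoPDFReal ht hm)
  · have hscale : log (m / c / m) = -log c := by rw [div_div_cancel_left' hm.ne', log_inv]
    rw [← integral_neg]
    simp only [← neg_mul]
    exact (hpareto negMulLog negMulLog_zero).trans
      ((integral_negMulLog_paretoPDFReal ht hm).trans (by rw [hscale]; ring))
end
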